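/- Let Q be a finite set of m queries, d : Q × Q → [0,1], k ≤ m, and α ≥ 1. Let p, p̂ : Q → [0,1] and c, c̲ : Q → [0,1] with c̲(q) ≤ c(q) for all q ∈ Q. Let M* be a minimizer of ℓ(·; p, c, d) over subsets of Q with at most k elements, and suppose M ⊆ Q with |M| ≤ k satisfies ℓ(M; p̂, c̲, d) ≤ α · ℓ(M'; p̂, c̲, d) for every M' ⊆ Q with |M'| ≤ k. Then ℓ(M; p, c, d) − α·ℓ(M*; p, c, d) ≤ Σ_{q ∈ Q : c̲(q) ≤ min_{u ∈ M} d(q,u)} p(q)·(c(q) − c̲(q)) + (1 + α)·Σ_{q ∈ Q} |p̂(q) − p(q)|. -/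

import Mathlib

/-- The semantic-cache loss: `ℓ(M; p, c, d) = Σ_{q ∈ Q} p(q) · min{c(q), min_{u ∈ M} d(q,u)}`,
with the convention that the inner minimum over an empty cache `M` is `+∞`, so the
summand degenerates to `p(q) · c(q)`. -/
noncomputable def cacheLoss {Q : Type*} [Fintype Q] (p c : Q → ℝ) (d : Q → Q → ℝ)
    (M : Finset Q) : ℝ :=
  ∑ q : Q, p q * (if h : M.Nonempty then min (c q) (M.inf' h (fun u => d q u)) else c q)

/-!
Replace the data `(p, c)` of `ℓ(M; p, c, d)` by the estimates `(p̂, c̲)`, apply the oracle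
inequality `ℓ(M; p̂, c̲, d) ≤ α ℓ(N; p̂, c̲, d)`, and return to the true data at the comparator `N`.

Passing between `p` and `p̂` costs at most `Σ c̲ |p̂ - p|`, once for `M` and `α` times for `N`.
At `N`, optimism `c̲ ≤ c` makes the passage from `c̲` to `c` free. At `M`, it costs `p (c - c̲)`
only where `c̲` attains the minimum: elsewhere some cached `u` has `d q u < c̲ q`, so the minimum
is attained on the cache and raising the LLM cost does not raise it.
-/

/-- The cost `min {x, min_{u ∈ M} δ u}` of serving one query, where `x` is the cost of calling the
LLM and `δ u` that of reusing the answer to `u`. Folding `min` from `x` gives `x` on the empty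
cache. -/
def serviceCost {U R : Type*} [LinearOrder R] (x : R) (δ : U → R) (M : Finset U) : R :=
  M.fold min x δ

section ServiceCost

variable {U R : Type*} [LinearOrder R] {x y z : R} {δ : U → R} {M : Finset U}

theorem le_serviceCost_iff : z ≤ serviceCost x δ M ↔ z ≤ x ∧ ∀ u ∈ M, z ≤ δ u :=
  Finset.le_fold_min z

theorem serviceCost_le_self : serviceCost x δ M ≤ x :=
  (le_serviceCost_iff.1 le_rfl).1

theorem serviceCost_le_of_mem {u : U} (hu : u ∈ M) : serviceCost x δ M ≤ δ u :=
  (le_serviceCost_iff.1 le_rfl).2 u hu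

theorem serviceCost_mono (hxy : x ≤ y) : serviceCost x δ M ≤ serviceCost y δ M :=
  le_serviceCost_iff.2 ⟨serviceCost_le_self.trans hxy, fun _ => serviceCost_le_of_mem⟩

theorem serviceCost_eq_self (hx : ∀ u ∈ M, x ≤ δ u) : serviceCost x δ M = x :=
  serviceCost_le_self.antisymm (le_serviceCost_iff.2 ⟨le_rfl, hx⟩)

theorem serviceCost_le_serviceCost_of_mem {u : U} (hu : u ∈ M) (hux : δ u ≤ x) :
    serviceCost y δ M ≤ serviceCost x δ M :=
  le_serviceCost_iff.2 ⟨(serviceCost_le_of_mem hu).trans hux, fun _ => serviceCost_le_of_mem⟩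

theorem serviceCost_eq_dite :
    serviceCost x δ M = if h : M.Nonempty then min x (M.inf' h δ) else x := by
  refine eq_of_forall_le_iff fun z => ?_
  split_ifs with h
  · rw [le_serviceCost_iff, le_min_iff, Finset.le_inf'_iff]
  · simp [le_serviceCost_iff, Finset.not_nonempty_iff_eq_empty.1 h]

end ServiceCost

theorem serviceCost_le_add_ite {U R : Type*} [LinearOrder R] [AddCommGroup R]
    (x y : R) (δ : U → R) (M : Finset U) [Decidable (∀ u ∈ M, x ≤ δ u)] :
    serviceCost y δ M ≤ serviceCost x δ M + if ∀ u ∈ M, x ≤ δ u then y - x else 0 := by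
  split_ifs with hx
  · simpa only [serviceCost_eq_self hx, add_sub_cancel] using serviceCost_le_self
  · push Not at hx
    obtain ⟨u, hu, hux⟩ := hx
    simpa only [add_zero] using serviceCost_le_serviceCost_of_mem hu hux.le

section CacheLoss

variable {Q : Type*} [Fintype Q] {p c c' : Q → ℝ} {d : Q → Q → ℝ}

theorem cacheLoss_eq_sum_mul_serviceCost (p c : Q → ℝ) (d : Q → Q → ℝ) (M : Finset Q) :
    cacheLoss p c d M = ∑ q, p q * serviceCost (c q) (d q) M := by
  simp only [cacheLoss, serviceCost_eq_dite]

theorem cacheLoss_mono_cost (hp : ∀ q, 0 ≤ p q) (hcc' : ∀ q, c q ≤ c' q) (M : Finset Q) :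
    cacheLoss p c d M ≤ cacheLoss p c' d M := by
  simp only [cacheLoss_eq_sum_mul_serviceCost]
  exact Finset.sum_le_sum fun q _ =>
    mul_le_mul_of_nonneg_left (serviceCost_mono (hcc' q)) (hp q)

theorem cacheLoss_le_add_sum_filter (hp : ∀ q, 0 ≤ p q) (c c' : Q → ℝ) (d : Q → Q → ℝ)
    (M : Finset Q) [DecidablePred fun q => ∀ u ∈ M, c q ≤ d q u] :
    cacheLoss p c' d M ≤
      cacheLoss p c d M + ∑ q with ∀ u ∈ M, c q ≤ d q u, p q * (c' q - c q) := by
  simp only [cacheLoss_eq_sum_mul_serviceCost]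
  rw [Finset.sum_filter, ← Finset.sum_add_distrib]
  refine Finset.sum_le_sum fun q _ => ?_
  simpa only [mul_add, mul_ite, mul_zero] using
    mul_le_mul_of_nonneg_left (serviceCost_le_add_ite (c q) (c' q) (d q) M) (hp q)

theorem abs_cacheLoss_sub_cacheLoss_le (hc : ∀ q, 0 ≤ c q) (hd : ∀ q u, 0 ≤ d q u)
    (p p' : Q → ℝ) (M : Finset Q) :
    |cacheLoss p c d M - cacheLoss p' c d M| ≤ ∑ q, c q * |p q - p' q| := by
  have serviceCost_nonneg (q : Q) : 0 ≤ serviceCost (c q) (d q) M :=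
    le_serviceCost_iff.2 ⟨hc q, fun u _ => hd q u⟩
  calc |cacheLoss p c d M - cacheLoss p' c d M|
      = |∑ q, serviceCost (c q) (d q) M * (p q - p' q)| := by
        simp only [cacheLoss_eq_sum_mul_serviceCost, ← Finset.sum_sub_distrib, ← sub_mul, mul_comm]
    _ ≤ ∑ q, |serviceCost (c q) (d q) M * (p q - p' q)| := Finset.abs_sum_le_sum_abs _ _
    _ = ∑ q, serviceCost (c q) (d q) M * |p q - p' q| := by
        simp only [abs_mul, abs_of_nonneg (serviceCost_nonneg _)]
    _ ≤ ∑ q, c q * |p q - p' q| := by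
        gcongr
        exact serviceCost_le_self

end CacheLoss

theorem online_regret_decomposition_general {Q : Type*} [Fintype Q] {α : ℝ} (hα : 0 ≤ α)
    {p phat c clow : Q → ℝ} {d : Q → Q → ℝ} (hp : ∀ q, 0 ≤ p q) (hclow : ∀ q, 0 ≤ clow q)
    (hle : ∀ q, clow q ≤ c q) (hd : ∀ q u, 0 ≤ d q u) {M N : Finset Q}
    [DecidablePred fun q => ∀ u ∈ M, clow q ≤ d q u]
    (hMN : cacheLoss phat clow d M ≤ α * cacheLoss phat clow d N) :
    cacheLoss p c d M - α * cacheLoss p c d N ≤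
      (∑ q with ∀ u ∈ M, clow q ≤ d q u, p q * (c q - clow q)) +
        (1 + α) * ∑ q, clow q * |phat q - p q| := by
  set S := ∑ q with ∀ u ∈ M, clow q ≤ d q u, p q * (c q - clow q)
  set E := ∑ q, clow q * |phat q - p q|
  have shift (A : Finset Q) : |cacheLoss phat clow d A - cacheLoss p clow d A| ≤ E :=
    abs_cacheLoss_sub_cacheLoss_le hclow hd phat p A
  rw [sub_le_iff_le_add']
  calc cacheLoss p c d M
      ≤ cacheLoss p clow d M + S := cacheLoss_le_add_sum_filter hp clow c d M
    _ ≤ cacheLoss phat clow d M + E + S := by linarith [(abs_le.1 (shift M)).1]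
    _ ≤ α * cacheLoss phat clow d N + E + S := by gcongr
    _ ≤ α * (cacheLoss p clow d N + E) + E + S := by
        gcongr
        linarith [(abs_le.1 (shift N)).2]
    _ ≤ α * (cacheLoss p c d N + E) + E + S := by
        gcongr
        exact cacheLoss_mono_cost hp hle N
    _ = α * cacheLoss p c d N + (S + (1 + α) * E) := by ring

open Classical in
/-- Per-round regret decomposition for CLCB-SC-LS: if `M*` minimizes the
true loss over caches of size ≤ k, `c̲ ≤ c` pointwise (optimistic LCB estimates), and `M`
is an `α`-approximate minimizer of the estimated loss `ℓ(·; p̂, c̲, d)` over caches of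
size ≤ k, then
`ℓ(M; p, c, d) − α·ℓ(M*; p, c, d)
  ≤ Σ_{q : c̲(q) ≤ min_{u ∈ M} d(q,u)} p(q)(c(q) − c̲(q)) + (1+α)·Σ_q |p̂(q) − p(q)|`,
where the condition `c̲(q) ≤ min_{u ∈ M} d(q,u)` is expressed as `∀ u ∈ M, c̲(q) ≤ d(q,u)`
(vacuously true for `M = ∅`, matching the `+∞` convention). -/
theorem online_regret_decomposition {Q : Type*} [Fintype Q]
    (m k : ℕ) (hm : Fintype.card Q = m) (hkm : k ≤ m)
    (α : ℝ) (hα : 1 ≤ α)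
    (p phat c clow : Q → ℝ) (d : Q → Q → ℝ)
    (hp : ∀ q, 0 ≤ p q ∧ p q ≤ 1) (hphat : ∀ q, 0 ≤ phat q ∧ phat q ≤ 1)
    (hc : ∀ q, 0 ≤ c q ∧ c q ≤ 1) (hclow : ∀ q, 0 ≤ clow q ∧ clow q ≤ 1)
    (hle : ∀ q, clow q ≤ c q)
    (hd : ∀ q u, 0 ≤ d q u ∧ d q u ≤ 1)
    (Mstar : Finset Q) (hMstar_card : Mstar.card ≤ k)
    (hMstar_opt : ∀ M' : Finset Q, M'.card ≤ k →
      cacheLoss p c d Mstar ≤ cacheLoss p c d M')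
    (M : Finset Q) (hM_card : M.card ≤ k)
    (hM_approx : ∀ M' : Finset Q, M'.card ≤ k →
      cacheLoss phat clow d M ≤ α * cacheLoss phat clow d M') :
    cacheLoss p c d M - α * cacheLoss p c d Mstar ≤
      (∑ q ∈ Finset.univ.filter (fun q => ∀ u ∈ M, clow q ≤ d q u),
        p q * (c q - clow q)) + (1 + α) * ∑ q : Q, |phat q - p q| := by
  have hα0 : 0 ≤ α := zero_le_one.trans hα
  refine (online_regret_decomposition_general hα0 (fun q => (hp q).1) (fun q => (hclow q).1) hle
    (fun q u => (hd q u).1) (hM_approx Mstar hMstar_card)).trans ?_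
  gcongr
  exact mul_le_of_le_one_left (abs_nonneg _) (hclow _).2
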